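/- Let K be a star body in ℝⁿ, φ : (0,∞) → (0,∞) convex and strictly decreasing, and 0 ≤ i < n. Then (1/n)∫_{S^{n-1}} φ(1/ρ(K,u)) ρ(K,u)^{n-i} dS(u) ≥ W̃ᵢ(K) · φ( (V(B)/W̃ᵢ(K))^{1/(n-i)} ), where B is the unit ball and V(B) = W̃ᵢ(B) is its volume. If φ is strictly convex, equality holds if and only if K is a ball centered at the origin. -/

import Mathlib

open MeasureTheory Metric Set Real

/-- The surface (spherical) measure on the unit sphere `S^{n-1} ⊆ ℝⁿ`. -/
noncomputable def sphereσ (n : ℕ) : Measure (sphere (0 : EuclideanSpace ℝ (Fin n)) 1) :=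
  μH[(n : ℝ) - 1]

/- Let `f` and `g` be the radial functions of two star bodies and `p = n - i`. Integrated against
the dual cone measure `f ^ p • μ`, the inequality is Jensen's inequality for the function
`ψ s = φ (s ^ (1 / p))` evaluated at `(g / f) ^ p`: composing the antitone convex `φ` with the
concave `s ↦ s ^ (1 / p)` gives a convex function. Equality forces `g / f` to be constant almost
everywhere, hence everywhere by continuity, since the surface measure charges every nonempty open
set. That it does so, and that it is finite, follows by comparison with Lebesgue measure through
stereographic projections, which are locally Lipschitz in both directions. -/

section SphereMeasure

open Module Topology

section Chart

variable {X Y : Type*} [EMetricSpace X] [MeasurableSpace X] [BorelSpace X]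
  [EMetricSpace Y] [MeasurableSpace Y] [BorelSpace Y] {d : ℝ} {C : NNReal} {x : X}

lemma hausdorffMeasure_finiteAtFilter_of_chart [IsLocallyFiniteMeasure (μH[d] : Measure Y)]
    (hd : 0 ≤ d) (e : OpenPartialHomeomorph X Y) (hx : x ∈ e.source) {t : Set Y}
    (ht : t ∈ 𝓝 (e x)) (he : LipschitzOnWith C e.symm t) :
    (μH[d] : Measure X).FiniteAtFilter (𝓝 x) := by
  obtain ⟨s, hs, hs_fin⟩ := (μH[d] : Measure Y).finiteAt_nhds (e x)
  refine ⟨e.symm '' (t ∩ s), ?_, ?_⟩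
  · simpa only [e.left_inv hx] using
      e.symm.image_mem_nhds (e.map_source hx) (Filter.inter_mem ht hs)
  · calc μH[d] (e.symm '' (t ∩ s))
      _ ≤ (C : ENNReal) ^ d * μH[d] (t ∩ s) :=
        (he.mono inter_subset_left).hausdorffMeasure_image_le hd
      _ < ⊤ :=
        ENNReal.mul_lt_top (by finiteness) ((measure_mono inter_subset_right).trans_lt hs_fin)

lemma hausdorffMeasure_pos_of_chart [(μH[d] : Measure Y).IsOpenPosMeasure]
    (hd : 0 ≤ d) (e : OpenPartialHomeomorph X Y) (hx : x ∈ e.source) {t U : Set X}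
    (ht : t ∈ 𝓝 x) (he : LipschitzOnWith C e t) (hU : U ∈ 𝓝 x) :
    0 < (μH[d] : Measure X) U := by
  have h_image : 0 < μH[d] (e '' (t ∩ U)) :=
    Measure.measure_pos_of_mem_nhds _ (e.image_mem_nhds hx (Filter.inter_mem ht hU))
  have h_le : μH[d] (e '' (t ∩ U)) ≤ (C : ENNReal) ^ d * μH[d] (t ∩ U) :=
    (he.mono inter_subset_left).hausdorffMeasure_image_le hd
  exact (pos_of_mul_pos_right (h_image.trans_le h_le) zero_le).trans_le
    (measure_mono inter_subset_right)

end Chart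

variable {E : Type*} [NormedAddCommGroup E] [InnerProductSpace ℝ E]

lemma exists_lipschitzOnWith_stereographic {v : E} (hv : ‖v‖ = 1) {x : sphere (0 : E) 1}
    (hx : x ∈ (stereographic hv).source) :
    ∃ C, ∃ t ∈ 𝓝 x, LipschitzOnWith C (stereographic hv) t := by
  have hx_ne : (x : E) ≠ v := by simpa [Subtype.ext_iff] using hx
  have h_inner : innerSL ℝ v (x : E) ≠ 1 := by
    rwa [innerSL_apply_apply, Ne, inner_eq_one_iff_of_norm_eq_one hv (by simp), eq_comm]
  have h_open : IsOpen {y : E | innerSL ℝ v y ≠ 1} :=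
    isOpen_ne_fun (innerSL ℝ v).continuous continuous_const
  obtain ⟨C, t, ht, hC⟩ := ((contDiffOn_stereoToFun (n := 1)).contDiffAt
    (h_open.mem_nhds h_inner)).exists_lipschitzOnWith
  exact ⟨C, (↑) ⁻¹' t, continuous_subtype_val.continuousAt.preimage_mem_nhds ht,
    fun a ha b hb => hC ha hb⟩

lemma locallyLipschitz_stereographic_symm {v : E} (hv : ‖v‖ = 1) :
    LocallyLipschitz (stereographic hv).symm := by
  have h_smooth : ContDiff ℝ 1 fun w : (ℝ ∙ v)ᗮ => stereoInvFunAux v (w : E) :=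
    contDiff_stereoInvFunAux.comp (ℝ ∙ v)ᗮ.subtypeL.contDiff
  exact fun w => h_smooth.locallyLipschitz w

lemma mem_source_stereographic_neg (x : sphere (0 : E) 1) (hx : ‖-(x : E)‖ = 1) :
    x ∈ (stereographic hx).source := by
  simpa [Subtype.ext_iff] using ne_neg_of_mem_unit_sphere ℝ x

variable [FiniteDimensional ℝ E]

lemma finrank_orthogonal_span_singleton_eq_sub_one {v : E} (hv : ‖v‖ = 1) :
    (finrank ℝ (ℝ ∙ v)ᗮ : ℝ) = finrank ℝ E - 1 := by
  have hv_ne : v ≠ 0 := norm_ne_zero_iff.1 (hv ▸ one_ne_zero)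
  rw [← (ℝ ∙ v).finrank_add_finrank_orthogonal, finrank_span_singleton hv_ne]
  push_cast
  ring

variable [MeasurableSpace E] [BorelSpace E]

lemma isFiniteMeasure_hausdorffMeasure_unitSphere :
    IsFiniteMeasure (μH[(finrank ℝ E : ℝ) - 1] : Measure (sphere (0 : E) 1)) := by
  have : IsLocallyFiniteMeasure (μH[(finrank ℝ E : ℝ) - 1] : Measure (sphere (0 : E) 1)) := by
    refine ⟨fun x => ?_⟩
    have hx : ‖-(x : E)‖ = 1 := by simp
    obtain ⟨C, t, ht, hC⟩ := locallyLipschitz_stereographic_symm hx (stereographic hx x)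
    rw [← finrank_orthogonal_span_singleton_eq_sub_one hx]
    exact hausdorffMeasure_finiteAtFilter_of_chart (Nat.cast_nonneg _) _
      (mem_source_stereographic_neg x hx) ht hC
  infer_instance

lemma isOpenPosMeasure_hausdorffMeasure_unitSphere :
    (μH[(finrank ℝ E : ℝ) - 1] : Measure (sphere (0 : E) 1)).IsOpenPosMeasure := by
  refine ⟨fun U hU ⟨x, hxU⟩ => ne_of_gt ?_⟩
  have hx : ‖-(x : E)‖ = 1 := by simp
  have hx_source := mem_source_stereographic_neg x hx
  obtain ⟨C, t, ht, hC⟩ := exists_lipschitzOnWith_stereographic hx hx_source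
  rw [← finrank_orthogonal_span_singleton_eq_sub_one hx]
  exact hausdorffMeasure_pos_of_chart (Nat.cast_nonneg _) _ hx_source ht hC (hU.mem_nhds hxU)

instance isFiniteMeasure_sphereσ (n : ℕ) : IsFiniteMeasure (sphereσ n) := by
  simpa [sphereσ] using
    isFiniteMeasure_hausdorffMeasure_unitSphere (E := EuclideanSpace ℝ (Fin n))

instance isOpenPosMeasure_sphereσ (n : ℕ) : (sphereσ n).IsOpenPosMeasure := by
  simpa [sphereσ] using
    isOpenPosMeasure_hausdorffMeasure_unitSphere (E := EuclideanSpace ℝ (Fin n))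

end SphereMeasure

section RpowComposition

variable {φ : ℝ → ℝ} {q : ℝ}

lemma image_rpow_Ioi_zero (hq : q ≠ 0) : (fun s : ℝ => s ^ q) '' Ioi 0 = Ioi 0 := by
  refine Subset.antisymm (image_subset_iff.2 fun s hs => rpow_pos_of_pos hs q) fun t ht => ?_
  exact ⟨t ^ q⁻¹, rpow_pos_of_pos ht _, rpow_inv_rpow (le_of_lt ht) hq⟩

lemma concaveOn_rpow_Ioi (hq₀ : 0 ≤ q) (hq₁ : q ≤ 1) :
    ConcaveOn ℝ (Ioi 0) fun s : ℝ => s ^ q :=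
  (concaveOn_rpow hq₀ hq₁).subset Ioi_subset_Ici_self (convex_Ioi 0)

lemma convexOn_comp_rpow (hφ : ConvexOn ℝ (Ioi 0) φ) (hφ_anti : AntitoneOn φ (Ioi 0))
    (hq₀ : 0 < q) (hq₁ : q ≤ 1) : ConvexOn ℝ (Ioi 0) fun s => φ (s ^ q) := by
  rw [← image_rpow_Ioi_zero hq₀.ne'] at hφ hφ_anti
  exact hφ.comp_concaveOn (concaveOn_rpow_Ioi hq₀.le hq₁) hφ_anti

lemma strictConvexOn_comp_rpow (hφ : StrictConvexOn ℝ (Ioi 0) φ) (hφ_anti : AntitoneOn φ (Ioi 0))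
    (hq₀ : 0 < q) (hq₁ : q ≤ 1) : StrictConvexOn ℝ (Ioi 0) fun s => φ (s ^ q) := by
  rw [← image_rpow_Ioi_zero hq₀.ne'] at hφ hφ_anti
  exact hφ.comp_concaveOn (concaveOn_rpow_Ioi hq₀.le hq₁) hφ_anti
    ((rpow_left_injOn hq₀.ne').mono Ioi_subset_Ici_self)

end RpowComposition

section Jensen

variable {X : Type*} [TopologicalSpace X] [CompactSpace X]

lemma exists_Icc_subset_of_continuous [Nonempty X] {s : Set ℝ} {h : X → ℝ} (hs : s.OrdConnected)
    (hh : Continuous h) (hhs : ∀ x, h x ∈ s) :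
    ∃ a b, Icc a b ⊆ s ∧ ∀ x, h x ∈ Icc a b := by
  obtain ⟨x_min, -, h_min⟩ := isCompact_univ.exists_isMinOn univ_nonempty hh.continuousOn
  obtain ⟨x_max, -, h_max⟩ := isCompact_univ.exists_isMaxOn univ_nonempty hh.continuousOn
  exact ⟨h x_min, h x_max, hs.out (hhs x_min) (hhs x_max),
    fun x => ⟨h_min (mem_univ x), h_max (mem_univ x)⟩⟩

variable [MeasurableSpace X] [BorelSpace X]

lemma integrable_of_continuous_of_compactSpace {F : Type*} [NormedAddCommGroup F] {μ : Measure X}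
    [IsFiniteMeasureOnCompacts μ] {f : X → F} (hf : Continuous f) : Integrable f μ :=
  hf.integrable_of_hasCompactSupport (.of_compactSpace f)

variable {s : Set ℝ} {ψ : ℝ → ℝ} {h : X → ℝ} {μ : Measure X} [IsFiniteMeasure μ]

lemma map_average_le_average_of_continuous [NeZero μ] (hψ : ConvexOn ℝ s ψ) (hs : IsOpen s)
    (hh : Continuous h) (hhs : ∀ x, h x ∈ s) : ψ (⨍ x, h x ∂μ) ≤ ⨍ x, ψ (h x) ∂μ := by
  have := Measure.nonempty_of_neZero μ
  have hψ_cont : ContinuousOn ψ s := hψ.continuousOn hs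
  obtain ⟨a, b, hab, h_mem⟩ := exists_Icc_subset_of_continuous hψ.1.ordConnected hh hhs
  exact (hψ.subset hab (convex_Icc a b)).map_average_le (hψ_cont.mono hab) isClosed_Icc
    (.of_forall h_mem) (integrable_of_continuous_of_compactSpace hh)
    (integrable_of_continuous_of_compactSpace (hψ_cont.comp_continuous hh hhs))

lemma map_average_eq_average_iff_of_continuous [Nonempty X] [μ.IsOpenPosMeasure]
    (hψ : StrictConvexOn ℝ s ψ) (hs : IsOpen s) (hh : Continuous h) (hhs : ∀ x, h x ∈ s) :
    ψ (⨍ x, h x ∂μ) = ⨍ x, ψ (h x) ∂μ ↔ ∃ c, ∀ x, h x = c := by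
  refine ⟨fun h_eq => ?_, fun ⟨c, hc⟩ => by simp only [hc, average_const]⟩
  have hψ_cont : ContinuousOn ψ s := hψ.convexOn.continuousOn hs
  obtain ⟨a, b, hab, h_mem⟩ := exists_Icc_subset_of_continuous hψ.1.ordConnected hh hhs
  have h_ae := ((hψ.subset hab (convex_Icc a b)).ae_eq_const_or_map_average_lt (hψ_cont.mono hab)
    isClosed_Icc (.of_forall h_mem) (integrable_of_continuous_of_compactSpace hh)
    (integrable_of_continuous_of_compactSpace
      (hψ_cont.comp_continuous hh hhs))).resolve_right h_eq.not_lt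
  exact ⟨_, congrFun (Measure.eq_of_ae_eq h_ae hh continuous_const)⟩

end Jensen

section DualMinkowski

lemma exists_ratio_rpow_eq_const_iff {X : Type*} [Nonempty X] {f g : X → ℝ} {p : ℝ} (hp : p ≠ 0)
    (hf_pos : ∀ x, 0 < f x) (hg_pos : ∀ x, 0 < g x) :
    (∃ c, ∀ x, (g x / f x) ^ p = c) ↔ ∃ c, 0 < c ∧ ∀ x, f x = c * g x := by
  have h_ratio_pos (x : X) : 0 < g x / f x := div_pos (hg_pos x) (hf_pos x)
  constructor
  · rintro ⟨c, hc⟩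
    have h_ratio (x : X) : g x / f x = c ^ p⁻¹ := by
      rw [← hc x, rpow_rpow_inv (h_ratio_pos x).le hp]
    have hc_pos : 0 < c ^ p⁻¹ := h_ratio (Classical.arbitrary X) ▸ h_ratio_pos _
    refine ⟨(c ^ p⁻¹)⁻¹, inv_pos.2 hc_pos, fun x => ?_⟩
    rw [← h_ratio x, inv_div, div_mul_cancel₀ _ (hg_pos x).ne']
  · rintro ⟨c, -, hc⟩
    refine ⟨c⁻¹ ^ p, fun x => ?_⟩
    rw [hc x, div_mul_cancel_right₀ (hg_pos x).ne']

variable {X : Type*} [MeasurableSpace X]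

/-- The dual cone measure `f ^ p • μ`, not normalized. For `μ` the surface measure on the sphere and
`f` the radial function of a star body in `ℝⁿ`, its total mass is `n` times the dual
quermassintegral of order `n - p`. Negative values of `f ^ p` are truncated to `0`. -/
noncomputable def dualConeMeasure (μ : Measure X) (f : X → ℝ) (p : ℝ) : Measure X :=
  μ.withDensity fun x => ENNReal.ofReal (f x ^ p)

lemma integral_dualConeMeasure {μ : Measure X} {f : X → ℝ} (hf : Measurable f)
    (hf_nonneg : ∀ x, 0 ≤ f x) (p : ℝ) (h : X → ℝ) :
    ∫ x, h x ∂dualConeMeasure μ f p = ∫ x, h x * f x ^ p ∂μ := by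
  rw [dualConeMeasure, integral_withDensity_eq_integral_toReal_smul
    (hf.pow_const p).ennreal_ofReal (.of_forall fun _ => ENNReal.ofReal_lt_top)]
  simp only [ENNReal.toReal_ofReal (rpow_nonneg (hf_nonneg _) p), smul_eq_mul, mul_comm]

lemma average_dualConeMeasure {μ : Measure X} {f : X → ℝ} (hf : Measurable f)
    (hf_nonneg : ∀ x, 0 ≤ f x) (p : ℝ) (h : X → ℝ) :
    ⨍ x, h x ∂dualConeMeasure μ f p = (∫ x, h x * f x ^ p ∂μ) / ∫ x, f x ^ p ∂μ := by
  have h_mass : (dualConeMeasure μ f p).real univ = ∫ x, f x ^ p ∂μ := by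
    simpa using integral_dualConeMeasure (μ := μ) hf hf_nonneg p fun _ => 1
  rw [average_eq, h_mass, integral_dualConeMeasure hf hf_nonneg, smul_eq_mul, inv_mul_eq_div]

lemma average_dualConeMeasure_ratio_rpow {μ : Measure X} {f g : X → ℝ} (hf : Measurable f)
    (hf_pos : ∀ x, 0 < f x) (hg_nonneg : ∀ x, 0 ≤ g x) (p : ℝ) :
    ⨍ x, (g x / f x) ^ p ∂dualConeMeasure μ f p = (∫ x, g x ^ p ∂μ) / ∫ x, f x ^ p ∂μ := by
  rw [average_dualConeMeasure hf fun x => (hf_pos x).le]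
  simp only [div_rpow (hg_nonneg _) (hf_pos _).le,
    div_mul_cancel₀ _ (rpow_pos_of_pos (hf_pos _) p).ne']

variable [TopologicalSpace X] {μ : Measure X} {f g : X → ℝ} {p : ℝ}

lemma isOpenPosMeasure_dualConeMeasure [μ.IsOpenPosMeasure] (hf : Measurable f)
    (hf_pos : ∀ x, 0 < f x) : (dualConeMeasure μ f p).IsOpenPosMeasure := by
  have h_ne_zero (x : X) : ENNReal.ofReal (f x ^ p) ≠ 0 :=
    (ENNReal.ofReal_pos.2 (rpow_pos_of_pos (hf_pos x) p)).ne'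
  exact (withDensity_absolutelyContinuous' (hf.pow_const p).ennreal_ofReal.aemeasurable
    (.of_forall h_ne_zero)).isOpenPosMeasure

variable [CompactSpace X] [BorelSpace X] [IsFiniteMeasure μ]

lemma isFiniteMeasure_dualConeMeasure (hf : Continuous f) (hf_pos : ∀ x, 0 < f x) :
    IsFiniteMeasure (dualConeMeasure μ f p) :=
  isFiniteMeasure_withDensity_ofReal (integrable_of_continuous_of_compactSpace
    (hf.rpow_const fun x => .inl (hf_pos x).ne')).2

variable [Nonempty X] [μ.IsOpenPosMeasure]

lemma integral_pos_of_continuous_of_pos (hf : Continuous f) (hf_pos : ∀ x, 0 < f x) :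
    0 < ∫ x, f x ∂μ :=
  hf.integral_pos_of_hasCompactSupport_nonneg_nonzero (.of_compactSpace f)
    (fun x => (hf_pos x).le) (hf_pos (Classical.arbitrary X)).ne'

variable {φ : ℝ → ℝ}

theorem orlicz_dual_minkowski (hφ : ConvexOn ℝ (Ioi 0) φ) (hφ_anti : AntitoneOn φ (Ioi 0))
    (hp : 1 ≤ p) (hf : Continuous f) (hf_pos : ∀ x, 0 < f x) (hg : Continuous g)
    (hg_pos : ∀ x, 0 < g x) :
    (∫ x, f x ^ p ∂μ) * φ (((∫ x, g x ^ p ∂μ) / ∫ x, f x ^ p ∂μ) ^ p⁻¹) ≤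
        ∫ x, φ (g x / f x) * f x ^ p ∂μ ∧
      (StrictConvexOn ℝ (Ioi 0) φ →
        ((∫ x, f x ^ p ∂μ) * φ (((∫ x, g x ^ p ∂μ) / ∫ x, f x ^ p ∂μ) ^ p⁻¹) =
            ∫ x, φ (g x / f x) * f x ^ p ∂μ ↔
          ∃ c, 0 < c ∧ ∀ x, f x = c * g x)) := by
  have hp_pos : 0 < p := one_pos.trans_le hp
  have hp_inv_le : p⁻¹ ≤ 1 := inv_le_one_of_one_le₀ hp
  have h_fin := isFiniteMeasure_dualConeMeasure (μ := μ) (p := p) hf hf_pos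
  have h_openPos := isOpenPosMeasure_dualConeMeasure (μ := μ) (p := p) hf.measurable hf_pos
  have h_mass_pos : 0 < ∫ x, f x ^ p ∂μ := integral_pos_of_continuous_of_pos
    (hf.rpow_const fun x => .inl (hf_pos x).ne') fun x => rpow_pos_of_pos (hf_pos x) p
  have h_ratio_pos (x : X) : 0 < g x / f x := div_pos (hg_pos x) (hf_pos x)
  have h_ratio_rpow_pos (x : X) : (g x / f x) ^ p ∈ Ioi 0 := rpow_pos_of_pos (h_ratio_pos x) p
  have h_ratio_rpow_cont : Continuous fun x => (g x / f x) ^ p :=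
    (hg.div hf fun x => (hf_pos x).ne').rpow_const fun x => .inl (h_ratio_pos x).ne'
  have h_average := average_dualConeMeasure_ratio_rpow (μ := μ) hf.measurable hf_pos
    (fun x => (hg_pos x).le) p
  have h_average_comp : ⨍ x, φ (((g x / f x) ^ p) ^ p⁻¹) ∂dualConeMeasure μ f p =
      (∫ x, φ (g x / f x) * f x ^ p ∂μ) / ∫ x, f x ^ p ∂μ := by
    simp only [rpow_rpow_inv (h_ratio_pos _).le hp_pos.ne',
      average_dualConeMeasure hf.measurable fun x => (hf_pos x).le]
  constructor
  · rw [← le_div_iff₀' h_mass_pos, ← h_average, ← h_average_comp]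
    exact map_average_le_average_of_continuous
      (convexOn_comp_rpow hφ hφ_anti (inv_pos.2 hp_pos) hp_inv_le) isOpen_Ioi
      h_ratio_rpow_cont h_ratio_rpow_pos
  · intro hφ_strict
    rw [mul_comm, ← eq_div_iff h_mass_pos.ne', ← h_average, ← h_average_comp,
      ← exists_ratio_rpow_eq_const_iff hp_pos.ne' hf_pos hg_pos]
    exact map_average_eq_average_iff_of_continuous
      (strictConvexOn_comp_rpow hφ_strict hφ_anti (inv_pos.2 hp_pos) hp_inv_le) isOpen_Ioi
      h_ratio_rpow_cont h_ratio_rpow_pos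

end DualMinkowski

section Quermassintegral

variable {n : ℕ}

/-- The dual quermassintegral `W̃ᵢ(K)` of the star body `K` in `ℝⁿ` with radial function `ρ`, for a
real order `i`. -/
noncomputable def dualQuermassintegral (i : ℝ)
    (ρ : sphere (0 : EuclideanSpace ℝ (Fin n)) 1 → ℝ) : ℝ :=
  (1 / n) * ∫ u, ρ u ^ ((n : ℝ) - i) ∂sphereσ n

/-- The Orlicz dual quermassintegral `W̃_{φ,i}(K, L)` of the star bodies `K` and `L` in `ℝⁿ` with
radial functions `ρK` and `ρL`, for a real order `i`. -/
noncomputable def orliczDualQuermassintegral (φ : ℝ → ℝ) (i : ℝ)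
    (ρK ρL : sphere (0 : EuclideanSpace ℝ (Fin n)) 1 → ℝ) : ℝ :=
  (1 / n) * ∫ u, φ (ρL u / ρK u) * ρK u ^ ((n : ℝ) - i) ∂sphereσ n

theorem orlicz_dual_isoperimetric_general (hn : 0 < n) {i : ℝ} (hi : i + 1 ≤ n) {φ : ℝ → ℝ}
    (hφ : ConvexOn ℝ (Ioi 0) φ) (hφ_anti : AntitoneOn φ (Ioi 0))
    {ρK ρL : sphere (0 : EuclideanSpace ℝ (Fin n)) 1 → ℝ} (hK : Continuous ρK)
    (hK_pos : ∀ u, 0 < ρK u) (hL : Continuous ρL) (hL_pos : ∀ u, 0 < ρL u) :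
    dualQuermassintegral i ρK *
          φ ((dualQuermassintegral i ρL / dualQuermassintegral i ρK) ^ ((n : ℝ) - i)⁻¹) ≤
        orliczDualQuermassintegral φ i ρK ρL ∧
      (StrictConvexOn ℝ (Ioi 0) φ →
        (orliczDualQuermassintegral φ i ρK ρL = dualQuermassintegral i ρK *
            φ ((dualQuermassintegral i ρL / dualQuermassintegral i ρK) ^ ((n : ℝ) - i)⁻¹) ↔
          ∃ c, 0 < c ∧ ∀ u, ρK u = c * ρL u)) := by
  have hn_inv : 0 < 1 / (n : ℝ) := one_div_pos.2 (Nat.cast_pos.2 hn)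
  have : NeZero n := ⟨hn.ne'⟩
  have : Nonempty (sphere (0 : EuclideanSpace ℝ (Fin n)) 1) :=
    (NormedSpace.sphere_nonempty.2 zero_le_one).to_subtype
  simp only [orliczDualQuermassintegral, dualQuermassintegral, mul_div_mul_left _ _ hn_inv.ne',
    mul_assoc, mul_le_mul_iff_right₀ hn_inv, mul_right_inj' hn_inv.ne']
  rw [eq_comm]
  exact orlicz_dual_minkowski hφ hφ_anti (le_sub_iff_add_le'.2 hi) hK hK_pos hL hL_pos

end Quermassintegral

/-- The Orlicz dual isoperimetric inequality:
`W̃_{φ,i}(K,B) ≥ W̃ᵢ(K)·φ((V(B)/W̃ᵢ(K))^{1/(n-i)})` where `B` is the unit ball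
(`ρ(B,·) ≡ 1`, so `V(B) = W̃ᵢ(B) = σ(S^{n-1})/n`); if `φ` is strictly convex,
equality holds iff `K` is a ball centered at the origin. -/
theorem orlicz_dual_isoperimetric
    (n i : ℕ) (hi : i < n)
    (φ : ℝ → ℝ)
    (hφconv : ConvexOn ℝ (Ioi 0) φ)
    (hφanti : StrictAntiOn φ (Ioi 0))
    (hφpos : ∀ t ∈ Ioi (0 : ℝ), 0 < φ t)
    (ρK : sphere (0 : EuclideanSpace ℝ (Fin n)) 1 → ℝ)
    (hKc : Continuous ρK) (hKpos : ∀ u, 0 < ρK u)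
    (WφB WK VB : ℝ)
    (hWφB : WφB = (1 / n) * ∫ u, φ (1 / ρK u) * (ρK u) ^ (n - i) ∂(sphereσ n))
    (hWK : WK = (1 / n) * ∫ u, (ρK u) ^ (n - i) ∂(sphereσ n))
    (hVB : VB = (1 / n) * ∫ _u, (1 : ℝ) ∂(sphereσ n)) :
    WφB ≥ WK * φ ((VB / WK) ^ (((n : ℝ) - i)⁻¹)) ∧
      (StrictConvexOn ℝ (Ioi 0) φ →
        (WφB = WK * φ ((VB / WK) ^ (((n : ℝ) - i)⁻¹)) ↔
          ∃ c : ℝ, 0 < c ∧ ∀ u, ρK u = c)) := by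
  subst hWφB hWK hVB
  simpa [orliczDualQuermassintegral, dualQuermassintegral, ← Nat.cast_sub hi.le] using
    orlicz_dual_isoperimetric_general (i := i) (i.zero_le.trans_lt hi) (mod_cast hi) hφconv
      hφanti.antitoneOn hKc hKpos continuous_const fun _ => one_pos
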